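/- Let φ : N₁ ⥤ N₂ be an admissible epi-functor between nested graphs, and let μ : N₁ ⥤ N₂' be the canonical merger obtained by identifying, within each fiber of φ, all objects that are vertices of that fiber. Then the irreducible flags of N₂' are precisely the images under μ of the irreducible flags of N₁. -/

import Mathlib

open CategoryTheory

universe v u

/-- A morphism in a category is an identity morphism (up to `eqToHom`). -/
def IsId {C : Type u} [Category.{v} C] {A B : C} (f : A ⟶ B) : Prop :=
  ∃ h : A = B, f = eqToHom h

/-- A flag in a nested graph is a non-identity morphism. -/
def IsFlag {C : Type u} [Category.{v} C] {A B : C} (f : A ⟶ B) : Prop :=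
  ¬ IsId f

/-- An irreducible flag is a flag that cannot be written as the composite of two flags. -/
def IsIrred {C : Type u} [Category.{v} C] {A B : C} (f : A ⟶ B) : Prop :=
  IsFlag f ∧ ¬ ∃ (X : C) (g : A ⟶ X) (h : X ⟶ B), IsFlag g ∧ IsFlag h ∧ g ≫ h = f

/-- A grading: a functor to the finite ordinal `Fin n` (viewed as a preorder category)
sending every non-identity morphism to a non-identity morphism. -/
def IsGrading {C : Type u} [Category.{v} C] {n : ℕ} (G : C ⥤ Fin n) : Prop :=
  ∀ ⦃A B : C⦄ (f : A ⟶ B), IsFlag f → IsFlag (G.map f)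

/-- A nested graph: a category admitting a grading into some finite ordinal. -/
def IsNestedGraph (C : Type u) [Category.{v} C] : Prop :=
  ∃ (n : ℕ) (G : C ⥤ Fin n), IsGrading G

/-- A functor `φ` contracts a flag `f` if `φ.map f` is an identity. -/
def Contracts {C D : Type u} [Category.{v} C] [Category.{v} D]
    (φ : C ⥤ D) {A B : C} (f : A ⟶ B) : Prop :=
  IsId (φ.map f)

/-- An admissible functor: it maps irreducible flags to identities or irreducible flags,
and whenever it contracts an irreducible flag with domain `A`, it contracts every
irreducible flag with domain `A`. -/
def IsAdmissible {C D : Type u} [Category.{v} C] [Category.{v} D] (φ : C ⥤ D) : Prop :=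
  (∀ ⦃A B : C⦄ (f : A ⟶ B), IsIrred f → IsId (φ.map f) ∨ IsIrred (φ.map f)) ∧
  (∀ ⦃A B B' : C⦄ (f : A ⟶ B) (g : A ⟶ B'), IsIrred f → IsIrred g →
      Contracts φ f → Contracts φ g)

/-- The morphisms of the codomain generated by the image of a functor. -/
inductive GenBy {C D : Type u} [Category.{v} C] [Category.{v} D] (φ : C ⥤ D) :
    ∀ {X Y : D}, (X ⟶ Y) → Prop
  | id (X : D) : GenBy φ (𝟙 X)
  | map {A B : C} (f : A ⟶ B) : GenBy φ (φ.map f)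
  | comp {X Y Z : D} (f : X ⟶ Y) (g : Y ⟶ Z) :
      GenBy φ f → GenBy φ g → GenBy φ (f ≫ g)

/-- An epi-functor: its image generates the codomain. -/
def IsEpiFunctor {C D : Type u} [Category.{v} C] [Category.{v} D] (φ : C ⥤ D) : Prop :=
  Function.Surjective φ.obj ∧ ∀ ⦃X Y : D⦄ (f : X ⟶ Y), GenBy φ f

/-- `μ : C ⥤ D` exhibits `D` as the quotient of `C` identifying `r`-related objects,
with morphisms freely generated by the morphisms of `C` subject to the composition
relations of `C` (expressed via the universal property). -/
def IsQuotientBy {C D : Type u} [Category.{v} C] [Category.{v} D]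
    (r : C → C → Prop) (μ : C ⥤ D) : Prop :=
  (∀ A B : C, μ.obj A = μ.obj B ↔ Relation.EqvGen r A B) ∧
  Function.Surjective μ.obj ∧
  (∀ ⦃X Y : D⦄ (f : X ⟶ Y), GenBy μ f) ∧
  (∀ (E : Type u) [Category.{v} E] (F : C ⥤ E),
      (∀ A B : C, r A B → F.obj A = F.obj B) → ∃! F' : D ⥤ E, μ ⋙ F' = F)

/-- A merger: an admissible epi-functor exhibiting its codomain as the quotient of its
domain by an equivalence relation on objects, with morphisms freely generated subject to
the composition relations of the domain. -/
def IsMerger {C D : Type u} [Category.{v} C] [Category.{v} D] (μ : C ⥤ D) : Prop :=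
  IsAdmissible μ ∧ IsEpiFunctor μ ∧
    ∃ r : C → C → Prop, Equivalence r ∧ IsQuotientBy r μ

/-- `A` is a vertex of its fiber under `φ`: it is not the domain of any flag
contracted by `φ`. -/
def IsVertexOver {C D : Type u} [Category.{v} C] [Category.{v} D]
    (φ : C ⥤ D) (A : C) : Prop :=
  ∀ ⦃B : C⦄ (f : A ⟶ B), Contracts φ f → IsId f

/-- `A₁` is a vertex of the fiber of `φ` over `A₂`. -/
def IsFiberVertex {C D : Type u} [Category.{v} C] [Category.{v} D]
    (φ : C ⥤ D) (A₂ : D) (A₁ : C) : Prop :=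
  φ.obj A₁ = A₂ ∧ IsVertexOver φ A₁

/-- A contraction: an admissible epi-functor each of whose fibers is a corolla,
i.e. has a unique vertex. -/
def IsContraction {C D : Type u} [Category.{v} C] [Category.{v} D] (κ : C ⥤ D) : Prop :=
  IsAdmissible κ ∧ IsEpiFunctor κ ∧ ∀ A₂ : D, ∃! A₁ : C, IsFiberVertex κ A₂ A₁

/-- The canonical merger relation of `φ`: it relates distinct objects `A ≠ B` exactly when
`φ A = φ B` and both `A` and `B` are vertices of the fiber of `φ` over `φ A`. -/
def mergerRel {C D : Type u} [Category.{v} C] [Category.{v} D] (φ : C ⥤ D) :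
    C → C → Prop :=
  fun A B => A ≠ B ∧ φ.obj A = φ.obj B ∧ IsVertexOver φ A ∧ IsVertexOver φ B

/-- A canonical merger–contraction decomposition of `φ`: the merger part is the quotient
of the domain identifying, within each fiber of `φ`, all objects that are vertices of that
fiber. -/
def IsCanonicalDecomp {C P D : Type u} [Category.{v} C] [Category.{v} P] [Category.{v} D]
    (φ : C ⥤ D) (μ : C ⥤ P) (κ : P ⥤ D) : Prop :=
  IsQuotientBy (mergerRel φ) μ ∧ μ ⋙ κ = φ

/-- Two merger–contraction pairs are equal as morphisms of nested graphs: one is obtained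
from the other by shifting an isomorphism from the merger to the contraction. -/
def PairEquiv {A B P P' : Type u} [Category.{v} A] [Category.{v} B]
    [Category.{v} P] [Category.{v} P']
    (μ : A ⥤ P) (κ : P ⥤ B) (μ' : A ⥤ P') (κ' : P' ⥤ B) : Prop :=
  ∃ (e : P ⥤ P') (e' : P' ⥤ P), e ⋙ e' = 𝟭 P ∧ e' ⋙ e = 𝟭 P' ∧
    μ ⋙ e = μ' ∧ e ⋙ κ' = κ

/-- A category contains no cycle of flags. -/
def NoFlagCycles (C : Type u) [Category.{v} C] : Prop :=
  ∀ (k : ℕ), 0 < k → ∀ (obj : Fin (k + 1) → C)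
    (flag : ∀ i : Fin k, obj i.castSucc ⟶ obj i.succ),
    (∀ i, IsFlag (flag i)) → obj 0 ≠ obj (Fin.last k)

theorem isId_id {C : Type u} [Category.{v} C] (A : C) : IsId (𝟙 A) :=
  ⟨rfl, rfl⟩

theorem IsId.map {C D : Type u} [Category.{v} C] [Category.{v} D] (F : C ⥤ D) {A B : C}
    {f : A ⟶ B} (hf : IsId f) : IsId (F.map f) := by
  obtain ⟨rfl, rfl⟩ := hf
  exact ⟨rfl, by simp⟩

theorem IsId.comp {C : Type u} [Category.{v} C] {A B D : C} {f : A ⟶ B} {g : B ⟶ D}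
    (hf : IsId f) (hg : IsId g) : IsId (f ≫ g) := by
  obtain ⟨rfl, rfl⟩ := hf
  obtain ⟨rfl, rfl⟩ := hg
  exact ⟨rfl, by simp⟩

/-- A grading strictly increases along flags. -/
theorem IsGrading.obj_lt {C : Type u} [Category.{v} C] {n : ℕ} {G : C ⥤ Fin n}
    (hG : IsGrading G) {A B : C} {f : A ⟶ B} (hf : IsFlag f) : G.obj A < G.obj B :=
  lt_of_le_of_ne (leOfHom (G.map f)) fun h => hG f hf ⟨h, Subsingleton.elim _ _⟩

/-- In a nested graph the composite of two flags is a flag. -/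
theorem IsNestedGraph.isFlag_comp {C : Type u} [Category.{v} C] (hC : IsNestedGraph C)
    {A B D : C} {f : A ⟶ B} {g : B ⟶ D} (hf : IsFlag f) (hg : IsFlag g) :
    IsFlag (f ≫ g) := by
  obtain ⟨n, G, hG⟩ := hC
  rintro ⟨rfl, -⟩
  exact lt_asymm (hG.obj_lt hf) (hG.obj_lt hg)

/-- The three kinds of morphisms of a nested graph: identities, irreducible flags and
reducible flags. -/
inductive FlagKind : Type
  | identity
  | irreducible
  | reducible

namespace FlagKind

/-- The kind of a composite of morphisms of given kinds. -/
def mul : FlagKind → FlagKind → FlagKind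
  | identity, b => b
  | a, identity => a
  | _, _ => reducible

instance : Monoid FlagKind where
  one := identity
  mul := mul
  one_mul a := by cases a <;> rfl
  mul_one a := by cases a <;> rfl
  mul_assoc a b c := by cases a <;> cases b <;> cases c <;> rfl

theorem eq_one_of_mul_eq_one {a b : FlagKind} (h : a * b = 1) : a = 1 ∧ b = 1 := by
  cases a <;> cases b <;> first | exact ⟨rfl, rfl⟩ | cases h

theorem eq_one_or_eq_one_of_mul_eq_irreducible {a b : FlagKind}
    (h : a * b = irreducible) : a = 1 ∨ b = 1 := by
  cases a <;> cases b <;> first | exact Or.inl rfl | exact Or.inr rfl | cases h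

open Classical in
/-- The kind of a morphism. -/
noncomputable def ofHom {C : Type u} [Category.{v} C] {A B : C} (f : A ⟶ B) : FlagKind :=
  if IsId f then identity else if IsIrred f then irreducible else reducible

theorem ofHom_eq_one_iff {C : Type u} [Category.{v} C] {A B : C} (f : A ⟶ B) :
    ofHom f = 1 ↔ IsId f := by
  change ofHom f = identity ↔ _
  unfold ofHom
  split_ifs <;> simp_all

theorem ofHom_of_isIrred {C : Type u} [Category.{v} C] {A B : C} {f : A ⟶ B}
    (hf : IsIrred f) : ofHom f = irreducible := by
  unfold ofHom
  rw [if_neg hf.1, if_pos hf]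

theorem ofHom_comp {C : Type u} [Category.{v} C] (hC : IsNestedGraph C)
    {A B D : C} (f : A ⟶ B) (g : B ⟶ D) : ofHom (f ≫ g) = ofHom g * ofHom f := by
  by_cases hf : IsId f
  · rw [(ofHom_eq_one_iff f).2 hf, mul_one]
    obtain ⟨rfl, rfl⟩ := hf
    simp
  by_cases hg : IsId g
  · rw [(ofHom_eq_one_iff g).2 hg, one_mul]
    obtain ⟨rfl, rfl⟩ := hg
    simp
  have hred : ¬ IsIrred (f ≫ g) := fun h => h.2 ⟨_, f, g, hf, hg, rfl⟩
  unfold ofHom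
  rw [if_neg hf, if_neg hg, if_neg (hC.isFlag_comp hf hg), if_neg hred]
  split_ifs <;> rfl

/-- The functor recording the kinds of the morphisms of a nested graph. -/
noncomputable def functor {C : Type u} [Category.{v} C] (hC : IsNestedGraph C) :
    C ⥤ SingleObj FlagKind where
  obj _ := SingleObj.star FlagKind
  map f := ofHom f
  map_id A := (ofHom_eq_one_iff _).2 (isId_id A)
  map_comp f g := ofHom_comp hC f g

end FlagKind

/-- A functor to a one-object category extends along every quotient functor. -/
theorem IsQuotientBy.exists_extension_singleObj {C D : Type u} [Category.{v} C]
    [Category.{v} D] {r : C → C → Prop} {μ : C ⥤ D} (hμ : IsQuotientBy r μ)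
    {M : Type} [Monoid M] (F : C ⥤ SingleObj M) :
    ∃ H : D ⥤ SingleObj M, μ ⋙ H = F := by
  let _ : Category.{0} (ULift.{u} (SingleObj M)) := uliftCategory (SingleObj M)
  obtain ⟨F', hF', -⟩ := hμ.2.2.2 (ULiftHom.{v} (ULift.{u} (SingleObj M)))
    (F ⋙ ULift.upFunctor ⋙ ULiftHom.up) fun _ _ _ => rfl
  refine ⟨F' ⋙ ULiftHom.down ⋙ ULift.downFunctor, ?_⟩
  rw [← Functor.assoc, hF']
  rfl

/-- A quotient functor on a nested graph sends irreducible flags to irreducible flags. -/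
theorem IsQuotientBy.isIrred_map {C D : Type u} [Category.{v} C] [Category.{v} D]
    {r : C → C → Prop} {μ : C ⥤ D} (hμ : IsQuotientBy r μ) (hC : IsNestedGraph C)
    {A B : C} {f : A ⟶ B} (hf : IsIrred f) : IsIrred (μ.map f) := by
  obtain ⟨H, hH⟩ := hμ.exists_extension_singleObj (FlagKind.functor hC)
  let k {X Y : D} (g : X ⟶ Y) : FlagKind := H.map g
  have k_map {A B : C} (f : A ⟶ B) : k (μ.map f) = FlagKind.ofHom f := by
    have h := Functor.congr_hom hH f
    simp only [eqToHom_refl, Category.comp_id, Category.id_comp] at h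
    exact h
  have k_comp {X Y Z : D} (g : X ⟶ Y) (h : Y ⟶ Z) : k (g ≫ h) = k h * k g :=
    H.map_comp g h
  have k_of_isId {X Y : D} {g : X ⟶ Y} (hg : IsId g) : k g = 1 := by
    obtain ⟨rfl, rfl⟩ := hg
    exact H.map_id X
  have isId_of_k {X Y : D} (g : X ⟶ Y) : k g = 1 → IsId g := by
    induction hμ.2.2.1 g with
    | id X => exact fun _ => isId_id X
    | map f =>
      intro h
      rw [k_map, FlagKind.ofHom_eq_one_iff] at h
      exact h.map μ
    | comp f g _ _ ihf ihg =>
      intro h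
      rw [k_comp] at h
      obtain ⟨hg, hf⟩ := FlagKind.eq_one_of_mul_eq_one h
      exact (ihf hf).comp (ihg hg)
  have hkf : k (μ.map f) = FlagKind.irreducible := by
    rw [k_map, FlagKind.ofHom_of_isIrred hf]
  refine ⟨fun h => ?_, ?_⟩
  · rw [k_of_isId h] at hkf
    cases hkf
  · rintro ⟨X, g, h, hg, hh, hgh⟩
    rw [← hgh, k_comp] at hkf
    rcases FlagKind.eq_one_or_eq_one_of_mul_eq_irreducible hkf with h1 | h1
    · exact hh (isId_of_k h h1)
    · exact hg (isId_of_k g h1)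

/-- `g` is the image under `μ` of an irreducible flag. -/
def IsIrredImage {C D : Type u} [Category.{v} C] [Category.{v} D] (μ : C ⥤ D)
    {X Y : D} (g : X ⟶ Y) : Prop :=
  ∃ (A B : C) (f : A ⟶ B), IsIrred f ∧
    ∃ (hX : μ.obj A = X) (hY : μ.obj B = Y), g = eqToHom hX.symm ≫ μ.map f ≫ eqToHom hY

/-- If each factor of an irreducible composite is the image of an irreducible flag as soon as it
is irreducible, then so is the composite, because one of the factors is an identity. -/
theorem IsIrredImage.of_comp {C D : Type u} [Category.{v} C] [Category.{v} D] {μ : C ⥤ D}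
    {X Y Z : D} {g : X ⟶ Y} {h : Y ⟶ Z} (hgh : IsIrred (g ≫ h))
    (hg : IsIrred g → IsIrredImage μ g) (hh : IsIrred h → IsIrredImage μ h) :
    IsIrredImage μ (g ≫ h) := by
  by_cases hgId : IsId g
  · obtain ⟨rfl, rfl⟩ := hgId
    simp only [eqToHom_refl, Category.id_comp] at hgh ⊢
    exact hh hgh
  by_cases hhId : IsId h
  · obtain ⟨rfl, rfl⟩ := hhId
    simp only [eqToHom_refl, Category.comp_id] at hgh ⊢
    exact hg hgh
  exact absurd ⟨_, g, h, hgId, hhId, rfl⟩ hgh.2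

/-- If the image of a morphism of a nested graph is irreducible, then it is the image of an
irreducible flag. -/
theorem IsNestedGraph.isIrredImage_map {C D : Type u} [Category.{v} C] [Category.{v} D]
    (hC : IsNestedGraph C) (μ : C ⥤ D) {A B : C} (f : A ⟶ B) (hf : IsIrred (μ.map f)) :
    IsIrredImage μ (μ.map f) := by
  obtain ⟨n, G, hG⟩ := hC
  induction hd : (G.obj B : ℕ) - G.obj A using Nat.strong_induction_on generalizing A B with
  | _ d ih =>
    subst hd
    by_cases hirr : IsIrred f
    · exact ⟨A, B, f, hirr, rfl, rfl, by simp⟩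
    have hflag : IsFlag f := fun h => hf.1 (h.map μ)
    obtain ⟨X, g, h, hg, hh, rfl⟩ := not_not.1 fun h => hirr ⟨hflag, h⟩
    have hgX : (G.obj A : ℕ) < G.obj X := hG.obj_lt hg
    have hXh : (G.obj X : ℕ) < G.obj B := hG.obj_lt hh
    rw [μ.map_comp] at hf ⊢
    exact IsIrredImage.of_comp hf (fun h' => ih _ (by omega) g h' rfl)
      fun h' => ih _ (by omega) h h' rfl

/-- An irreducible flag generated by the image of `μ` is the image of an irreducible flag. -/
theorem GenBy.isIrredImage {C D : Type u} [Category.{v} C] [Category.{v} D] {μ : C ⥤ D}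
    (hC : IsNestedGraph C) {X Y : D} {g : X ⟶ Y} (hg : GenBy μ g) :
    IsIrred g → IsIrredImage μ g := by
  induction hg with
  | id X => exact fun h => absurd (isId_id X) h.1
  | map f => exact hC.isIrredImage_map μ f
  | comp f g _ _ ihf ihg => exact fun h => IsIrredImage.of_comp h ihf ihg

/-- if `φ : N₁ ⥤ N₂` is an admissible epi-functor between nested graphs and
`μ : N₁ ⥤ N₂'` is the canonical merger of `φ` (the quotient identifying, within each
fiber of `φ`, all objects that are vertices of that fiber), then the irreducible flags of
`N₂'` are precisely the images under `μ` of the irreducible flags of `N₁`. -/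
theorem canonical_merger_irreducible_flags {N₁ N₂ N₂' : Type u}
    [Category.{v} N₁] [Category.{v} N₂] [Category.{v} N₂']
    (h₁ : IsNestedGraph N₁) (h₂ : IsNestedGraph N₂)
    (φ : N₁ ⥤ N₂) (hadm : IsAdmissible φ) (hepi : IsEpiFunctor φ)
    (μ : N₁ ⥤ N₂') (hμ : IsQuotientBy (mergerRel φ) μ) :
    ∀ ⦃X Y : N₂'⦄ (g : X ⟶ Y), IsIrred g ↔
      ∃ (A B : N₁) (f : A ⟶ B), IsIrred f ∧
        ∃ (hX : μ.obj A = X) (hY : μ.obj B = Y),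
          g = eqToHom hX.symm ≫ μ.map f ≫ eqToHom hY := by
  intro X Y g
  refine ⟨fun hg => (hμ.2.2.1 g).isIrredImage h₁ hg, ?_⟩
  rintro ⟨A, B, f, hf, rfl, rfl, rfl⟩
  simpa using hμ.isIrred_map h₁ hf
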